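/- Let I ⊆ k[x_1,…,x_n] be an ideal, v ∈ ℝ^n_{>0}, and F a nonempty face of the cone C_v(I). Then the relative interior of F is exactly one equivalence class of the relation u ∼ u′ ⟺ in_u(I) = in_{u′}(I); i.e. for any w in the relative interior of F, the relative interior of F equals {u ∈ ℝ^n : in_u(I) = in_w(I)}. -/

import Mathlib

/-!
Let `≺` be a monomial order refining the comparison of `v`-degrees; it exists because `v > 0`.
Let `G` be a finite monic Gröbner basis of `I` for `≺` with reduced tails, and let `K` be the
closed cone of all weights `w` for which the `≺`-leading exponent of each `g ∈ G` has maximal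
`w`-degree in `g`.

*Algebra.* For `w ∈ K`, dividing an element of `I` by `G` never raises its `w`-degree
(`part_mem_span`). Hence the forms `in_w(g)`, `g ∈ G`, generate `in_w(I)`, and every nonzero
element of `in_w(I)` has an exponent in the `≺`-initial ideal (`exists_mem_leadSet`). The leading
exponent is the only exponent of `g` of this kind. So, if `in_u(I) = in_w(I)`, it occurs in
`in_u(g) ∈ in_w(I)`, and cancels in `in_u(g) - in_w(g) ∈ in_w(I)`, which is therefore zero. Thus
for `w ∈ K` and arbitrary `u`, `in_u(I) = in_w(I)` iff `in_u(g) = in_w(g)` for all `g ∈ G`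
(`initialFormIdeal_eq_iff`). In terms of the finitely many functionals `l` that define `K`, the
class of `w ∈ K` is the set of points of `K` at which the same inequalities `0 ≤ l` are tight as
at `w` (`exists_functionals`). Nothing is assumed about the signs of the coordinates of `u` and
`w`, which matters since faces of `C_v(I)` may leave the positive orthant.

*Convexity.* It follows that `C_v(I)` is a polyhedral cone contained in `K` (`closure_class`), and
the relative interior of a face of such a cone is the set of points with the same tight
inequalities as any given relatively interior point `w` (`intrinsicInterior_face`). By the
algebraic part that set is the class of `w`.
-/

open MvPolynomial

/-- A term order on the monomials of `k[x_1,…,x_n]`, identified with exponent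
vectors in `ℕ^n`: a strict total order with `1` smallest and compatible with
multiplication of monomials. -/
structure TermOrder (n : ℕ) : Type where
  lt : (Fin n →₀ ℕ) → (Fin n →₀ ℕ) → Prop
  irrefl : ∀ a, ¬ lt a a
  trans : ∀ a b c, lt a b → lt b c → lt a c
  total : ∀ a b, a ≠ b → lt a b ∨ lt b a
  zero_lt : ∀ a, a ≠ 0 → lt 0 a
  add_right : ∀ a b c, lt a b → lt (a + c) (b + c)

variable {n : ℕ} {k : Type*} [Field k]

/-- The exponent of the `τ`-largest term of `f` (and `0` if `f = 0`). -/
noncomputable def TermOrder.leadExp (τ : TermOrder n) (f : MvPolynomial (Fin n) k) :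
    Fin n →₀ ℕ :=
  letI := Classical.propDecidable (∃ α, α ∈ f.support ∧ ∀ β ∈ f.support, β ≠ α → τ.lt β α)
  if h : ∃ α, α ∈ f.support ∧ ∀ β ∈ f.support, β ≠ α → τ.lt β α then h.choose else 0

/-- The initial term `in_τ(f)` : the `τ`-largest term of `f` (with coefficient). -/
noncomputable def TermOrder.initialTerm (τ : TermOrder n) (f : MvPolynomial (Fin n) k) :
    MvPolynomial (Fin n) k :=
  monomial (τ.leadExp f) (f.coeff (τ.leadExp f))

/-- The initial ideal `in_τ(I) = ⟨in_τ(f) : f ∈ I \ {0}⟩`. -/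
noncomputable def TermOrder.initialIdeal (τ : TermOrder n) (I : Ideal (MvPolynomial (Fin n) k)) :
    Ideal (MvPolynomial (Fin n) k) :=
  Ideal.span {p | ∃ f ∈ I, f ≠ 0 ∧ p = τ.initialTerm f}

/-- The `ω`-degree `⟨ω,α⟩` of a monomial exponent `α`. -/
noncomputable def wdeg (ω : Fin n → ℝ) (α : Fin n →₀ ℕ) : ℝ := ∑ i, ω i * (α i : ℝ)

/-- The initial form `in_ω(f)`: the sum of the terms of `f` whose exponents
maximize `⟨ω,·⟩`. -/
noncomputable def initialForm (ω : Fin n → ℝ) (f : MvPolynomial (Fin n) k) :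
    MvPolynomial (Fin n) k :=
  letI : DecidablePred fun α : Fin n →₀ ℕ => ∀ β ∈ f.support, wdeg ω β ≤ wdeg ω α :=
    Classical.decPred _
  ∑ α ∈ f.support.filter (fun α => ∀ β ∈ f.support, wdeg ω β ≤ wdeg ω α),
    monomial α (f.coeff α)

/-- The initial ideal `in_ω(I) = ⟨in_ω(f) : f ∈ I⟩`. -/
noncomputable def initialFormIdeal (ω : Fin n → ℝ) (I : Ideal (MvPolynomial (Fin n) k)) :
    Ideal (MvPolynomial (Fin n) k) :=
  Ideal.span {p | ∃ f ∈ I, p = initialForm ω f}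

/-- `C_≺(I)`: the closure of `{u : in_u(I) = in_≺(I)}` in `ℝ^n`. -/
noncomputable def Cprec (τ : TermOrder n) (I : Ideal (MvPolynomial (Fin n) k)) :
    Set (Fin n → ℝ) :=
  closure {u : Fin n → ℝ | initialFormIdeal u I = τ.initialIdeal I}

/-- `C_v(I)`: the closure of the equivalence class `{u : in_u(I) = in_v(I)}`. -/
noncomputable def Cv (I : Ideal (MvPolynomial (Fin n) k)) (v : Fin n → ℝ) :
    Set (Fin n → ℝ) :=
  closure {u : Fin n → ℝ | initialFormIdeal u I = initialFormIdeal v I}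

/-- `F` is a face of `C`: either empty or the set of maximizers over `C` of a
linear functional. -/
def IsFaceOf (C F : Set (Fin n → ℝ)) : Prop :=
  F = ∅ ∨ ∃ w : Fin n → ℝ, F = {x ∈ C | ∀ y ∈ C, ∑ i, w i * y i ≤ ∑ i, w i * x i}

/-- The Gröbner fan of `I`: all nonempty faces of the cones `C_v(I)`, `v ∈ ℝ^n_{>0}`. -/
noncomputable def GroebnerFan (I : Ideal (MvPolynomial (Fin n) k)) :
    Set (Set (Fin n → ℝ)) :=
  {F | F.Nonempty ∧ ∃ v : Fin n → ℝ, (∀ i, 0 < v i) ∧ IsFaceOf (Cv I v) F}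

/-- `G` is a (finite) Gröbner basis of `I` w.r.t. `τ`. -/
def IsGroebnerBasis (τ : TermOrder n) (I : Ideal (MvPolynomial (Fin n) k))
    (G : Set (MvPolynomial (Fin n) k)) : Prop :=
  G.Finite ∧ Ideal.span G = I ∧ τ.initialIdeal I = Ideal.span (τ.initialTerm '' G)

/-- `G` is the reduced Gröbner basis of `I` w.r.t. `τ`. -/
def IsReducedGroebnerBasis (τ : TermOrder n) (I : Ideal (MvPolynomial (Fin n) k))
    (G : Set (MvPolynomial (Fin n) k)) : Prop :=
  IsGroebnerBasis τ I G ∧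
  (∀ g ∈ G, g.coeff (τ.leadExp g) = 1) ∧
  (∀ g ∈ G, ∀ α ∈ g.support, α ≠ τ.leadExp g →
    (monomial α 1 : MvPolynomial (Fin n) k) ∉ τ.initialIdeal I) ∧
  (∀ g ∈ G, Ideal.span (τ.initialTerm '' (G \ {g})) ≠ τ.initialIdeal I)

/-! ### Weights and homogeneous parts -/

lemma wdeg_add (w : Fin n → ℝ) (a b : Fin n →₀ ℕ) : wdeg w (a + b) = wdeg w a + wdeg w b := by
  simp [wdeg, mul_add, Finset.sum_add_distrib]

lemma weight_eq_wdeg (w : Fin n → ℝ) (a : Fin n →₀ ℕ) : Finsupp.weight w a = wdeg w a := by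
  simp [Finsupp.weight_apply, Finsupp.sum_fintype, wdeg, mul_comm]

open Classical in
lemma coeff_part (w : Fin n → ℝ) (d : ℝ) (f : MvPolynomial (Fin n) k) (a : Fin n →₀ ℕ) :
    coeff a (weightedHomogeneousComponent w d f) = if wdeg w a = d then coeff a f else 0 := by
  rw [coeff_weightedHomogeneousComponent, weight_eq_wdeg]

open Classical in
lemma coeff_initialForm (w : Fin n → ℝ) (f : MvPolynomial (Fin n) k) (a : Fin n →₀ ℕ) :
    coeff a (initialForm w f) =
      if ∀ b ∈ f.support, wdeg w b ≤ wdeg w a then coeff a f else 0 := by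
  unfold initialForm
  simp only [coeff_sum, coeff_monomial, Finset.sum_ite_eq', Finset.mem_filter, mem_support_iff]
  by_cases h : coeff a f = 0 <;> simp [h]

lemma initialForm_eq_part {w : Fin n → ℝ} {f : MvPolynomial (Fin n) k} {a : Fin n →₀ ℕ}
    (ha : a ∈ f.support) (hmax : ∀ b ∈ f.support, wdeg w b ≤ wdeg w a) :
    initialForm w f = weightedHomogeneousComponent w (wdeg w a) f := by
  classical
  ext b
  rw [coeff_initialForm, coeff_part]
  by_cases hb : coeff b f = 0
  · simp [hb]
  · congr 1
    apply propext
    constructor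
    · intro h
      exact le_antisymm (hmax b (mem_support_iff.2 hb)) (h a ha)
    · intro h c hc
      rw [h]; exact hmax c hc

lemma initialForm_zero (w : Fin n → ℝ) : initialForm w (0 : MvPolynomial (Fin n) k) = 0 := by
  simp [initialForm]

lemma exists_max_wdeg (w : Fin n → ℝ) {f : MvPolynomial (Fin n) k} (hf : f ≠ 0) :
    ∃ a ∈ f.support, ∀ b ∈ f.support, wdeg w b ≤ wdeg w a :=
  Finset.exists_max_image _ _ (support_nonempty.2 hf)

lemma initialForm_ne_zero (w : Fin n → ℝ) {f : MvPolynomial (Fin n) k} (hf : f ≠ 0) :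
    initialForm w f ≠ 0 := by
  classical
  obtain ⟨a, ha, hmax⟩ := exists_max_wdeg w hf
  intro h
  have := congrArg (coeff a) h
  rw [coeff_initialForm, if_pos hmax, coeff_zero] at this
  exact mem_support_iff.1 ha this

lemma mem_support_of_mem_support_initialForm {w : Fin n → ℝ} {f : MvPolynomial (Fin n) k}
    {a : Fin n →₀ ℕ} (ha : a ∈ (initialForm w f).support) :
    a ∈ f.support ∧ ∀ b ∈ f.support, wdeg w b ≤ wdeg w a := by
  classical
  rw [mem_support_iff, coeff_initialForm] at ha
  rw [mem_support_iff]
  grind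

lemma initialForm_mem (w : Fin n → ℝ) {I : Ideal (MvPolynomial (Fin n) k)}
    {f : MvPolynomial (Fin n) k} (hf : f ∈ I) : initialForm w f ∈ initialFormIdeal w I :=
  Ideal.subset_span ⟨f, hf, rfl⟩

lemma part_monomial_mul (w : Fin n → ℝ) (d : ℝ) (c : Fin n →₀ ℕ) (r : k)
    (p : MvPolynomial (Fin n) k) :
    weightedHomogeneousComponent w (wdeg w c + d) (monomial c r * p) =
      monomial c r * weightedHomogeneousComponent w d p := by
  classical
  ext a
  rw [coeff_part, coeff_monomial_mul', coeff_monomial_mul', coeff_part]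
  by_cases h : c ≤ a
  · obtain ⟨e, rfl⟩ := exists_add_of_le h
    simp [wdeg_add]
  · simp [h]

lemma exists_of_mem_support_monomial_mul {c : Fin n →₀ ℕ} {r : k}
    {p : MvPolynomial (Fin n) k} {a : Fin n →₀ ℕ} (ha : a ∈ (monomial c r * p).support) :
    ∃ e ∈ p.support, a = c + e := by
  classical
  rw [mem_support_iff, coeff_monomial_mul'] at ha
  by_cases h : c ≤ a
  · obtain ⟨e, rfl⟩ := exists_add_of_le h
    refine ⟨e, ?_, rfl⟩
    rw [mem_support_iff]
    intro h0
    simp [h0] at ha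
  · simp [h] at ha

/-- Every `w`-homogeneous part of an element of `in_w(I)` is the top-degree part of an element
of `I`: for each `d` there is `f ∈ I` of `w`-degree at most `d` with the same part in degree `d`. -/
lemma exists_lift_part (w : Fin n → ℝ) (I : Ideal (MvPolynomial (Fin n) k))
    {p : MvPolynomial (Fin n) k} (hp : p ∈ initialFormIdeal w I) :
    ∀ d : ℝ, ∃ f ∈ I, (∀ a ∈ f.support, wdeg w a ≤ d) ∧
      weightedHomogeneousComponent w d f = weightedHomogeneousComponent w d p := by
  classical
  have hadd : ∀ p q : MvPolynomial (Fin n) k,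
      (∀ d : ℝ, ∃ f ∈ I, (∀ a ∈ f.support, wdeg w a ≤ d) ∧
        weightedHomogeneousComponent w d f = weightedHomogeneousComponent w d p) →
      (∀ d : ℝ, ∃ f ∈ I, (∀ a ∈ f.support, wdeg w a ≤ d) ∧
        weightedHomogeneousComponent w d f = weightedHomogeneousComponent w d q) →
      (∀ d : ℝ, ∃ f ∈ I, (∀ a ∈ f.support, wdeg w a ≤ d) ∧
        weightedHomogeneousComponent w d f = weightedHomogeneousComponent w d (p + q)) := by
    intro p q hp hq d
    obtain ⟨f, hf, hfd, hfp⟩ := hp d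
    obtain ⟨g, hg, hgd, hgq⟩ := hq d
    refine ⟨f + g, I.add_mem hf hg, ?_, by rw [map_add, map_add, hfp, hgq]⟩
    intro a ha
    rcases Finset.mem_union.1 (support_add ha) with h | h
    exacts [hfd a h, hgd a h]
  refine Submodule.span_induction ?_ ?_ ?_ ?_ hp
  · rintro _ ⟨f, hf, rfl⟩ d
    rcases eq_or_ne f 0 with rfl | hf0
    · exact ⟨0, I.zero_mem, by simp, by rw [initialForm_zero]⟩
    obtain ⟨a, ha, hmax⟩ := exists_max_wdeg w hf0
    by_cases hd : wdeg w a = d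
    · subst hd
      refine ⟨f, hf, hmax, ?_⟩
      rw [initialForm_eq_part ha hmax]
      ext b
      simp only [coeff_part]
      split_ifs <;> rfl
    · refine ⟨0, I.zero_mem, by simp, ?_⟩
      rw [initialForm_eq_part ha hmax]
      ext b
      simp only [coeff_part, coeff_zero, map_zero]
      split_ifs with h1 h2
      · exact absurd (h2.symm.trans h1) hd
      · rfl
      · rfl
  · exact fun d => ⟨0, I.zero_mem, by simp, rfl⟩
  · intro p q _ _ hp hq
    exact hadd p q hp hq
  · intro h p _ hp
    rw [smul_eq_mul]
    induction h using MvPolynomial.induction_on' with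
    | monomial c r =>
      intro d
      obtain ⟨f, hf, hfd, hfp⟩ := hp (d - wdeg w c)
      refine ⟨monomial c r * f, I.mul_mem_left _ hf, ?_, ?_⟩
      · intro a ha
        obtain ⟨e, he, rfl⟩ := exists_of_mem_support_monomial_mul ha
        have := hfd e he
        rw [wdeg_add]; linarith
      · have hd : d = wdeg w c + (d - wdeg w c) := by ring
        rw [hd, part_monomial_mul, part_monomial_mul, hfp]
    | add h₁ h₂ h₁p h₂p =>
      rw [add_mul]
      exact hadd _ _ h₁p h₂p

/-! ### Reduced Gröbner bases -/

/-- For a positive weight `v` there is a monomial order refining the comparison of `v`-degrees. -/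
lemma exists_monomialOrder (v : Fin n → ℝ) (hv : ∀ i, 0 < v i) :
    ∃ m : MonomialOrder.{0, 0} (Fin n),
      ∀ a b : Fin n →₀ ℕ, m.toSyn a ≤ m.toSyn b → wdeg v a ≤ wdeg v b := by
  -- compare first by `v`-degree and then lexicographically
  let φ : (Fin n →₀ ℕ) →+ ℝ ×ₗ Lex (Fin n →₀ ℕ) :=
    { toFun := fun a => toLex (wdeg v a, toLex a)
      map_zero' := by simp [wdeg]
      map_add' := fun a b => by rw [wdeg_add]; rfl }
  have hinj : Function.Injective φ := fun a b h => by
    have h2 := congrArg (fun z => (ofLex (ofLex z).2)) h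
    exact h2
  have hmono : Monotone φ := by
    intro a b hab
    obtain ⟨c, rfl⟩ := exists_add_of_le hab
    have hc : 0 ≤ wdeg v c := Finset.sum_nonneg fun i _ => mul_nonneg (hv i).le (by positivity)
    refine Prod.Lex.toLex_mono ⟨?_, ?_⟩
    · change wdeg v a ≤ wdeg v (a + c)
      rw [wdeg_add]; linarith
    · exact Finsupp.toLex_monotone hab
  let e : (Fin n →₀ ℕ) ≃+ AddMonoidHom.mrange φ :=
    AddEquiv.ofBijective φ.mrangeRestrict
      ⟨fun a b h => hinj (congrArg Subtype.val h), φ.mrangeRestrict_surjective⟩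
  have he : Monotone e := fun a b hab => hmono hab
  -- Dickson's lemma makes the order a well-order
  have : WellQuasiOrderedLE (AddMonoidHom.mrange φ) :=
    he.wellQuasiOrderedLE_of_wellQuasiOrderedLE_of_surjective e.surjective
  refine ⟨{ syn := AddMonoidHom.mrange φ, toSyn := e, toSyn_monotone := he }, ?_⟩
  intro a b hab
  exact Prod.Lex.monotone_fst (φ a) (φ b) hab

/-- The exponents of the leading monomials of the nonzero elements of `I`. -/
def leadSet (m : MonomialOrder (Fin n)) (I : Ideal (MvPolynomial (Fin n) k)) :
    Set (Fin n →₀ ℕ) :=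
  {a | ∃ f ∈ I, f ≠ 0 ∧ m.degree f = a}

/-- `G` is a finite Gröbner basis of `I` consisting of monic polynomials `g`, in each of which
`m.degree g` is the only exponent that lies in the initial ideal of `I`. Minimality of `G` is not
demanded. -/
structure IsTailReduced (m : MonomialOrder (Fin n)) (I : Ideal (MvPolynomial (Fin n) k))
    (G : Finset (MvPolynomial (Fin n) k)) : Prop where
  mem : ∀ g ∈ G, g ∈ I
  coeff_degree : ∀ g ∈ G, coeff (m.degree g) g = 1
  reduced : ∀ g ∈ G, ∀ b ∈ g.support, b ∈ leadSet m I → b = m.degree g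
  exists_le : ∀ a ∈ leadSet m I, ∃ g ∈ G, m.degree g ≤ a

lemma IsTailReduced.degree_mem_support {m : MonomialOrder (Fin n)}
    {I : Ideal (MvPolynomial (Fin n) k)} {G : Finset (MvPolynomial (Fin n) k)}
    (hG : IsTailReduced m I G) {g : MvPolynomial (Fin n) k} (hg : g ∈ G) :
    m.degree g ∈ g.support := by
  rw [mem_support_iff, hG.coeff_degree g hg]; exact one_ne_zero

/-- Each leading exponent `a` of `I` is the leading exponent of `x^a` minus its normal form. -/
lemma exists_monic_reduced (m : MonomialOrder (Fin n)) (I : Ideal (MvPolynomial (Fin n) k))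
    {a : Fin n →₀ ℕ} (ha : a ∈ leadSet m I) :
    ∃ g ∈ I, m.degree g = a ∧ coeff a g = 1 ∧ ∀ b ∈ g.support, b ∈ leadSet m I → b = a := by
  classical
  obtain ⟨c, r, hcr, -, hr⟩ := m.div_set (B := {f | f ∈ I ∧ f ≠ 0})
    (fun b hb => (m.leadingCoeff_ne_zero_iff.2 hb.2).isUnit) (monomial a (1 : k))
  have hr' : ∀ b ∈ r.support, b ∉ leadSet m I := by
    rintro b hb ⟨f, hf, hf0, rfl⟩
    exact hr _ hb f ⟨hf, hf0⟩ le_rfl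
  have hra : coeff a r = 0 := by
    by_contra h
    exact hr' a (mem_support_iff.2 h) ha
  have hmem : monomial a (1 : k) - r ∈ I := by
    rw [hcr, add_sub_cancel_right, Finsupp.linearCombination_apply]
    exact I.sum_mem fun b _ => I.mul_mem_left _ b.2.1
  have hcoeff : coeff a (monomial a (1 : k) - r) = 1 := by simp [hra]
  have hred : ∀ b ∈ (monomial a (1 : k) - r).support, b ∈ leadSet m I → b = a := by
    intro b hb hbl
    by_contra hne
    have hrb : coeff b r = 0 := by
      by_contra h
      exact hr' b (mem_support_iff.2 h) hbl
    rw [mem_support_iff, coeff_sub, coeff_monomial, if_neg (Ne.symm hne), hrb] at hb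
    simp at hb
  have hne : monomial a (1 : k) - r ≠ 0 := by
    intro h
    rw [h] at hcoeff
    simp at hcoeff
  exact ⟨_, hmem, hred _ (m.degree_mem_support hne) ⟨_, hmem, hne, rfl⟩, hcoeff, hred⟩

lemma exists_isTailReduced (m : MonomialOrder (Fin n)) (I : Ideal (MvPolynomial (Fin n) k)) :
    ∃ G, IsTailReduced m I G := by
  classical
  have hfin : {a | Minimal (· ∈ leadSet m I) a}.Finite :=
    WellQuasiOrderedLE.finite_of_isAntichain (setOfPred_minimal_antichain _)
  choose! g hgI hgdeg hgc hgr using fun a (ha : a ∈ leadSet m I) => exists_monic_reduced m I ha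
  refine ⟨hfin.toFinset.image g, ?_, ?_, ?_, ?_⟩
  · intro p hp
    obtain ⟨a, ha, rfl⟩ := Finset.mem_image.1 hp
    exact hgI a (hfin.mem_toFinset.1 ha).prop
  · intro p hp
    obtain ⟨a, ha, rfl⟩ := Finset.mem_image.1 hp
    have ha' := (hfin.mem_toFinset.1 ha).prop
    rw [hgdeg a ha', hgc a ha']
  · intro p hp
    obtain ⟨a, ha, rfl⟩ := Finset.mem_image.1 hp
    have ha' := (hfin.mem_toFinset.1 ha).prop
    rw [hgdeg a ha']
    exact hgr a ha'
  · intro a ha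
    obtain ⟨b, hba, hb⟩ := exists_minimal_le_of_wellFoundedLT (· ∈ leadSet m I) a ha
    exact ⟨g b, Finset.mem_image_of_mem _ (hfin.mem_toFinset.2 hb), by rwa [hgdeg b hb.prop]⟩

/-! ### Initial ideals for weights in the Gröbner cone -/

section cone

variable {m : MonomialOrder (Fin n)} {I : Ideal (MvPolynomial (Fin n) k)}
  {G : Finset (MvPolynomial (Fin n) k)}

/-- Division by `G`, for a weight `w` compatible with the leading terms of `G`. Dividing `f ∈ I`
never raises the `w`-degree, so only the steps in top `w`-degree contribute to the top part. -/
lemma part_mem_span (hG : IsTailReduced m I G) {w : Fin n → ℝ}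
    (hw : ∀ g ∈ G, ∀ b ∈ g.support, wdeg w b ≤ wdeg w (m.degree g)) (d : ℝ)
    (f : MvPolynomial (Fin n) k) (hf : f ∈ I) (hfd : ∀ a ∈ f.support, wdeg w a ≤ d) :
    weightedHomogeneousComponent w d f ∈ Ideal.span (initialForm w '' (G : Set _)) ∧
      (weightedHomogeneousComponent w d f ≠ 0 →
        ∃ a ∈ (weightedHomogeneousComponent w d f).support, a ∈ leadSet m I) := by
  classical
  induction hs : m.toSyn (m.degree f) using WellFoundedLT.induction generalizing f with
  | ind s ih =>
  subst hs
  rcases eq_or_ne f 0 with rfl | hf0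
  · simp
  have hfs := m.degree_mem_support hf0
  have ha : m.degree f ∈ leadSet m I := ⟨f, hf, hf0, rfl⟩
  obtain ⟨g, hg, hga⟩ := hG.exists_le _ ha
  obtain ⟨c, hc⟩ := exists_add_of_le hga
  rw [add_comm] at hc
  have hgs := hG.degree_mem_support hg
  -- one division step, with multiplier `monomial c (lc f)`
  set q : MvPolynomial (Fin n) k := monomial c (m.leadingCoeff f) * g with hq
  have hqI : q ∈ I := I.mul_mem_left _ (hG.mem g hg)
  have hqd : ∀ a ∈ q.support, wdeg w a ≤ wdeg w (m.degree f) := by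
    intro a ha
    obtain ⟨e, he, rfl⟩ := exists_of_mem_support_monomial_mul ha
    have := hw g hg e he
    rw [hc, wdeg_add, wdeg_add]; linarith
  have hqm : ∀ a ∈ q.support, m.toSyn a ≤ m.toSyn (m.degree f) := by
    intro a ha
    obtain ⟨e, he, rfl⟩ := exists_of_mem_support_monomial_mul ha
    rw [hc, map_add, map_add]
    exact add_le_add_right (m.le_degree he) _
  have hqc : coeff (m.degree f) q = coeff (m.degree f) f := by
    conv_lhs => rw [hc]
    rw [hq, coeff_monomial_mul, hG.coeff_degree g hg, mul_one]
    rfl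
  have hfI' : f - q ∈ I := I.sub_mem hf hqI
  have hfd' : ∀ a ∈ (f - q).support, wdeg w a ≤ d := by
    intro a ha
    rcases Finset.mem_union.1 (support_sub _ _ _ ha) with h | h
    · exact hfd a h
    · exact (hqd a h).trans (hfd _ hfs)
  have key : weightedHomogeneousComponent w d (f - q) ∈
        Ideal.span (initialForm w '' (G : Set _)) ∧
      (weightedHomogeneousComponent w d (f - q) ≠ 0 →
        ∃ a ∈ (weightedHomogeneousComponent w d (f - q)).support, a ∈ leadSet m I) := by
    rcases eq_or_ne (f - q) 0 with h0 | h0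
    · rw [h0]; simp
    refine ih _ ?_ (f - q) hfI' hfd' rfl
    have hmem := m.degree_mem_support h0
    refine lt_of_le_of_ne ?_ ?_
    · rcases Finset.mem_union.1 (support_sub _ _ _ hmem) with h | h
      · exact m.le_degree h
      · exact hqm _ h
    · intro h
      rw [m.toSyn.injective h, mem_support_iff, coeff_sub, hqc, sub_self] at hmem
      exact hmem rfl
  have hfq : weightedHomogeneousComponent w d f =
      weightedHomogeneousComponent w d (f - q) + weightedHomogeneousComponent w d q := by
    rw [← map_add, sub_add_cancel]
  rcases (hfd _ hfs).eq_or_lt with hd | hd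
  · constructor
    · rw [hfq]
      refine Ideal.add_mem _ key.1 ?_
      have : d = wdeg w c + wdeg w (m.degree g) := by rw [← hd, hc, wdeg_add]
      rw [this, hq, part_monomial_mul, ← initialForm_eq_part hgs (hw g hg)]
      exact Ideal.mul_mem_left _ _ (Ideal.subset_span ⟨g, hg, rfl⟩)
    · intro _
      refine ⟨m.degree f, ?_, ha⟩
      rw [mem_support_iff, coeff_part, if_pos hd]
      exact mem_support_iff.1 hfs
  · have hq0 : weightedHomogeneousComponent w d q = 0 := by
      ext a
      rw [coeff_part, coeff_zero]
      split_ifs with h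
      · by_contra hne
        have := hqd a (mem_support_iff.2 hne)
        linarith
      · rfl
    rw [hfq, hq0, add_zero]
    exact key

lemma initialFormIdeal_eq_span (hG : IsTailReduced m I G) {w : Fin n → ℝ}
    (hw : ∀ g ∈ G, ∀ b ∈ g.support, wdeg w b ≤ wdeg w (m.degree g)) :
    initialFormIdeal w I = Ideal.span (initialForm w '' (G : Set _)) := by
  apply le_antisymm
  · refine Ideal.span_le.2 ?_
    rintro _ ⟨f, hf, rfl⟩
    rcases eq_or_ne f 0 with rfl | hf0
    · rw [initialForm_zero]; exact Ideal.zero_mem _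
    obtain ⟨a, ha, hmax⟩ := exists_max_wdeg w hf0
    rw [initialForm_eq_part ha hmax]
    exact (part_mem_span hG hw _ f hf hmax).1
  · refine Ideal.span_le.2 ?_
    rintro _ ⟨g, hg, rfl⟩
    exact initialForm_mem w (hG.mem g hg)

/-- A nonzero polynomial in normal form modulo the initial ideal of `I` cannot lie in
`in_w(I)`. -/
lemma exists_mem_leadSet (hG : IsTailReduced m I G) {w : Fin n → ℝ}
    (hw : ∀ g ∈ G, ∀ b ∈ g.support, wdeg w b ≤ wdeg w (m.degree g))
    {p : MvPolynomial (Fin n) k} (hp : p ∈ initialFormIdeal w I) (hp0 : p ≠ 0) :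
    ∃ a ∈ p.support, a ∈ leadSet m I := by
  classical
  obtain ⟨b, hb⟩ := support_nonempty.2 hp0
  obtain ⟨f, hf, hfd, hfp⟩ := exists_lift_part w I hp (wdeg w b)
  have hne : weightedHomogeneousComponent w (wdeg w b) f ≠ 0 := by
    rw [hfp]
    intro h
    have := congrArg (coeff b) h
    rw [coeff_part, if_pos rfl, coeff_zero] at this
    exact mem_support_iff.1 hb this
  obtain ⟨a, ha, hal⟩ := (part_mem_span hG hw _ f hf hfd).2 hne
  refine ⟨a, ?_, hal⟩
  rw [hfp, mem_support_iff, coeff_part] at ha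
  rw [mem_support_iff]
  intro h
  simp [h] at ha

/-- For a weight `w` in the Gröbner cone of `G`, the class of `w` is cut out by the initial forms
of the elements of `G`. The weight `u` is arbitrary. -/
lemma initialFormIdeal_eq_iff (hG : IsTailReduced m I G) {w : Fin n → ℝ}
    (hw : ∀ g ∈ G, ∀ b ∈ g.support, wdeg w b ≤ wdeg w (m.degree g)) (u : Fin n → ℝ) :
    initialFormIdeal u I = initialFormIdeal w I ↔
      ∀ g ∈ G, ∀ b ∈ g.support, wdeg u b ≤ wdeg u (m.degree g) ∧
        (wdeg u b = wdeg u (m.degree g) ↔ wdeg w b = wdeg w (m.degree g)) := by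
  classical
  constructor
  · intro h g hg
    have hgs := hG.degree_mem_support hg
    have hg0 : g ≠ 0 := support_nonempty.1 ⟨_, hgs⟩
    have hu : initialForm u g ∈ initialFormIdeal w I := h ▸ initialForm_mem u (hG.mem g hg)
    -- the leading exponent of `g` is its only one in `leadSet`, so it survives in `in_u(g)`
    obtain ⟨a, ha, hal⟩ := exists_mem_leadSet hG hw hu (initialForm_ne_zero u hg0)
    obtain ⟨hag, hmax⟩ := mem_support_of_mem_support_initialForm ha
    obtain rfl := hG.reduced g hg a hag hal
    have heq : initialForm u g = initialForm w g := by
      rw [← sub_eq_zero]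
      by_contra hne
      obtain ⟨b, hb, hbl⟩ := exists_mem_leadSet hG hw
        (Ideal.sub_mem _ hu (initialForm_mem w (hG.mem g hg))) hne
      have hbg : b ∈ g.support := by
        rcases Finset.mem_union.1 (support_sub _ _ _ hb) with h | h
        exacts [(mem_support_of_mem_support_initialForm h).1,
          (mem_support_of_mem_support_initialForm h).1]
      obtain rfl := hG.reduced g hg b hbg hbl
      rw [mem_support_iff, coeff_sub, coeff_initialForm, coeff_initialForm, if_pos hmax,
        if_pos (hw g hg), sub_self] at hb
      exact hb rfl
    intro b hb
    refine ⟨hmax b hb, ?_⟩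
    have hcb := congrArg (coeff b) heq
    rw [initialForm_eq_part hgs hmax, initialForm_eq_part hgs (hw g hg), coeff_part,
      coeff_part] at hcb
    have hb' := mem_support_iff.1 hb
    grind
  · intro h
    rw [initialFormIdeal_eq_span hG hw, initialFormIdeal_eq_span hG fun g hg b hb => (h g hg b hb).1]
    congr 1
    refine Set.image_congr fun g hg => ?_
    have hgs := hG.degree_mem_support hg
    rw [initialForm_eq_part hgs (hw g hg), initialForm_eq_part hgs fun b hb => (h g hg b hb).1]
    ext b
    rw [coeff_part, coeff_part]
    by_cases hb : coeff b g = 0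
    · simp [hb]
    · simp only [(h g hg b (mem_support_iff.2 hb)).2]

end cone

/-- `⟨u, a - b⟩` as a linear functional of the weight `u`. -/
noncomputable def wdegDiff (a b : Fin n →₀ ℕ) : (Fin n → ℝ) →ₗ[ℝ] ℝ where
  toFun u := wdeg u a - wdeg u b
  map_add' u u' := by simp only [wdeg, Pi.add_apply, add_mul, Finset.sum_add_distrib]; ring
  map_smul' c u := by
    simp only [wdeg, Pi.smul_apply, smul_eq_mul, mul_assoc, ← Finset.mul_sum, RingHom.id_apply]
    ring

/-- The Gröbner cone of `v`, together with the equivalence classes of all weights in it,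
described by finitely many linear functionals. -/
lemma exists_functionals (I : Ideal (MvPolynomial (Fin n) k)) (v : Fin n → ℝ) (hv : ∀ i, 0 < v i) :
    ∃ D : Set ((Fin n → ℝ) →ₗ[ℝ] ℝ), D.Finite ∧ (∀ l ∈ D, 0 ≤ l v) ∧
      ∀ w, (∀ l ∈ D, 0 ≤ l w) → ∀ u, initialFormIdeal u I = initialFormIdeal w I ↔
        ∀ l ∈ D, 0 ≤ l u ∧ (l u = 0 ↔ l w = 0) := by
  classical
  obtain ⟨m, hm⟩ := exists_monomialOrder v hv
  obtain ⟨G, hG⟩ := exists_isTailReduced m I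
  refine ⟨⋃ g ∈ G, wdegDiff (m.degree g) '' (g.support : Set _), ?_, ?_, ?_⟩
  · exact G.finite_toSet.biUnion fun g _ => g.support.finite_toSet.image _
  · simp only [Set.mem_iUnion, Set.mem_image]
    rintro l ⟨g, hg, b, hb, rfl⟩
    exact sub_nonneg.2 (hm _ _ (m.le_degree hb))
  · intro w hw u
    simp only [Set.mem_iUnion, Set.mem_image] at hw ⊢
    rw [initialFormIdeal_eq_iff hG
      fun g hg b hb => sub_nonneg.1 (hw _ ⟨g, hg, b, hb, rfl⟩)]
    constructor
    · rintro h l ⟨g, hg, b, hb, rfl⟩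
      have := h g hg b hb
      simpa [wdegDiff, sub_eq_zero, eq_comm] using this
    · intro h g hg b hb
      have := h _ ⟨g, hg, b, hb, rfl⟩
      simpa [wdegDiff, sub_eq_zero, eq_comm] using this

/-! ### Faces of polyhedral cones -/

section convex

variable {E : Type*} [NormedAddCommGroup E] [NormedSpace ℝ E]

/-- A segment ending at a relatively interior point can be prolonged inside the set. -/
lemma exists_prolong {F : Set E} {w x : E} (hw : w ∈ intrinsicInterior ℝ F) (hx : x ∈ F) :
    ∃ ε : ℝ, 0 < ε ∧ w + ε • (w - x) ∈ F := by
  obtain ⟨y, hy, rfl⟩ := mem_intrinsicInterior.1 hw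
  have hmem : ∀ t : ℝ, (y : E) + t • ((y : E) - x) ∈ affineSpan ℝ F := by
    intro t
    have := AffineMap.lineMap_mem (-t) y.2 (subset_affineSpan ℝ F hx)
    rw [AffineMap.lineMap_apply] at this
    convert this using 1
    simp only [vsub_eq_sub, vadd_eq_add]
    module
  let γ : ℝ → affineSpan ℝ F := fun t => ⟨(y : E) + t • ((y : E) - x), hmem t⟩
  have hγ : Continuous γ := by
    refine Continuous.subtype_mk ?_ _
    fun_prop
  have h0 : γ 0 = y := by ext; simp [γ]
  have hev : ∀ᶠ t in nhds (0 : ℝ), γ t ∈ interior ((↑) ⁻¹' F : Set (affineSpan ℝ F)) :=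
    hγ.continuousAt.eventually_mem (by rw [h0]; exact isOpen_interior.mem_nhds hy)
  obtain ⟨ε, hε, hpos⟩ :=
    ((hev.filter_mono nhdsWithin_le_nhds).and self_mem_nhdsWithin : ∀ᶠ t in nhdsWithin (0 : ℝ)
      (Set.Ioi 0), _ ∧ t ∈ Set.Ioi (0 : ℝ)).exists
  have hmemF : γ ε ∈ ((↑) ⁻¹' F : Set (affineSpan ℝ F)) := interior_subset hε
  exact ⟨ε, hpos, hmemF⟩

variable [FiniteDimensional ℝ E]

/-- The closure of a nonempty relatively open polyhedral cone is given by the weak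
inequalities. -/
lemma closure_class {D : Set (E →ₗ[ℝ] ℝ)} {v : E} (hv : ∀ l ∈ D, 0 ≤ l v) :
    closure {u | ∀ l ∈ D, 0 ≤ l u ∧ (l u = 0 ↔ l v = 0)} =
      {u | ∀ l ∈ D, 0 ≤ l u ∧ (l v = 0 → l u = 0)} := by
  apply subset_antisymm
  · refine closure_minimal (fun u hu l hl => ⟨(hu l hl).1, (hu l hl).2.2⟩) ?_
    simp only [Set.ofPred_forall, Set.ofPred_and]
    refine isClosed_biInter fun l _ => ?_
    have hc := l.continuous_of_finiteDimensional
    refine (isClosed_le continuous_const hc).inter ?_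
    by_cases h : l v = 0
    · simpa [h] using isClosed_eq hc continuous_const
    · simp [h]
  · intro u hu
    -- `u + t v` lies in the open cone for every `t > 0`
    have hlim : Filter.Tendsto (fun t : ℝ => u + t • v) (nhdsWithin 0 (Set.Ioi 0)) (nhds u) := by
      have : Continuous fun t : ℝ => u + t • v := by fun_prop
      have h := this.tendsto 0
      simp only [zero_smul, add_zero] at h
      exact h.mono_left nhdsWithin_le_nhds
    refine mem_closure_of_tendsto hlim ?_
    filter_upwards [self_mem_nhdsWithin] with t ht l hl
    have ht : 0 < t := ht
    obtain ⟨h1, h2⟩ := hu l hl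
    simp only [map_add, map_smul, smul_eq_mul]
    rcases (hv l hl).eq_or_lt with h | h
    · simp [← h, h2 h.symm]
    · have := mul_pos ht h
      constructor
      · linarith
      · constructor <;> intro h' <;> linarith

/-- The relative interior of a face of a polyhedral cone consists of the points of the cone at
which the same inequalities are tight as at one given relatively interior point. -/
lemma intrinsicInterior_face {D : Set (E →ₗ[ℝ] ℝ)} (hD : D.Finite) {v : E} (c : E → ℝ)
    (hc : IsLinearMap ℝ c) {C F : Set E}
    (hC : C = {u | ∀ l ∈ D, 0 ≤ l u ∧ (l v = 0 → l u = 0)})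
    (hF : F = {x ∈ C | ∀ y ∈ C, c y ≤ c x}) {w : E} (hw : w ∈ intrinsicInterior ℝ F) :
    intrinsicInterior ℝ F = {u | ∀ l ∈ D, 0 ≤ l u ∧ (l u = 0 ↔ l w = 0)} := by
  have hwF : w ∈ F := intrinsicInterior_subset hw
  have hFC : F ⊆ C := by rw [hF]; exact fun x hx => hx.1
  have hCl : ∀ {x}, x ∈ C → ∀ l ∈ D, 0 ≤ l x ∧ (l v = 0 → l x = 0) := by
    intro x hx; rw [hC] at hx; exact hx
  have hwmax : ∀ y ∈ C, c y ≤ c w := by rw [hF] at hwF; exact hwF.2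
  -- the face is cut out of the cone by the inequalities tight at `w`
  have hFeq : F = {u | ∀ l ∈ D, 0 ≤ l u ∧ (l w = 0 → l u = 0)} := by
    apply subset_antisymm
    · intro x hx l hl
      refine ⟨(hCl (hFC hx) l hl).1, fun h0 => ?_⟩
      obtain ⟨ε, hε, hmem⟩ := exists_prolong hw hx
      have h1 := (hCl (hFC hmem) l hl).1
      have h2 := (hCl (hFC hx) l hl).1
      simp only [map_add, map_smul, map_sub, smul_eq_mul, h0] at h1
      nlinarith
    · intro x hx
      have hxC : x ∈ C := by
        rw [hC]
        exact fun l hl => ⟨(hx l hl).1, fun h => (hx l hl).2 ((hCl (hFC hwF) l hl).2 h)⟩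
      have hev : ∀ᶠ t in nhdsWithin (0 : ℝ) (Set.Ioi 0), w + t • (w - x) ∈ C := by
        have : ∀ l ∈ D, ∀ᶠ t in nhdsWithin (0 : ℝ) (Set.Ioi 0), 0 ≤ l (w + t • (w - x)) := by
          intro l hl
          rcases (hCl (hFC hwF) l hl).1.eq_or_lt with h | h
          · refine Filter.Eventually.of_forall fun t => ?_
            simp [← h, (hx l hl).2 h.symm]
          · refine Filter.Eventually.filter_mono nhdsWithin_le_nhds ?_
            have hcont : Continuous fun t : ℝ => l (w + t • (w - x)) :=
              l.continuous_of_finiteDimensional.comp (by fun_prop)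
            have h0 : 0 < l (w + (0 : ℝ) • (w - x)) := by simpa using h
            exact (hcont.continuousAt.eventually (lt_mem_nhds h0)).mono fun t ht => le_of_lt ht
        filter_upwards [(hD.eventually_all).2 this] with t ht
        rw [hC]
        refine fun l hl => ⟨ht l hl, fun h => ?_⟩
        have h1 := (hCl (hFC hwF) l hl).2 h
        simp [h1, (hx l hl).2 h1]
      obtain ⟨ε, hmem, hε⟩ := (hev.and self_mem_nhdsWithin).exists
      have hε : 0 < ε := hε
      have h1 := hwmax _ hmem
      -- maximality of `c` at `w` and at the prolonged point forces maximality at `x`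
      rw [hc.map_add, hc.map_smul, hc.map_sub, smul_eq_mul] at h1
      have h2 : c w ≤ c x := by nlinarith
      rw [hF]
      exact ⟨hxC, fun y hy => (hwmax y hy).trans h2⟩
  apply subset_antisymm
  · intro u hu l hl
    have huF := intrinsicInterior_subset hu
    have hu' := huF
    rw [hFeq] at hu'
    refine ⟨(hu' l hl).1, fun h0 => ?_, (hu' l hl).2⟩
    obtain ⟨ε, hε, hmem⟩ := exists_prolong hu hwF
    have h1 := (hCl (hFC hmem) l hl).1
    have h2 := (hCl (hFC hwF) l hl).1
    simp only [map_add, map_smul, map_sub, smul_eq_mul, h0] at h1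
    nlinarith
  · intro u hu
    have huF : u ∈ F := by
      rw [hFeq]; exact fun l hl => ⟨(hu l hl).1, (hu l hl).2.2⟩
    -- the equations tight at `w` hold on the affine span; the strict ones define an open set
    have hspan : ∀ x ∈ affineSpan ℝ F, ∀ l ∈ D, l w = 0 → l x = 0 := by
      intro x hx l hl h0
      have hle : affineSpan ℝ F ≤ (LinearMap.ker l).toAffineSubspace := by
        refine affineSpan_le.2 fun y hy => ?_
        rw [hFeq] at hy
        exact (hy l hl).2 h0
      exact hle hx
    rw [mem_intrinsicInterior]
    refine ⟨⟨u, subset_affineSpan ℝ F huF⟩, ?_, rfl⟩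
    rw [mem_interior_iff_mem_nhds]
    have hev : ∀ l ∈ D, ∀ᶠ y : affineSpan ℝ F in nhds ⟨u, subset_affineSpan ℝ F huF⟩,
        l w ≠ 0 → 0 < l (y : E) := by
      intro l hl
      by_cases h0 : l w = 0
      · exact Filter.Eventually.of_forall fun y h => absurd h0 h
      have hpos : 0 < l u :=
        lt_of_le_of_ne (hu l hl).1 fun h => h0 ((hu l hl).2.1 h.symm)
      have hcont : Continuous fun y : affineSpan ℝ F => l (y : E) :=
        l.continuous_of_finiteDimensional.comp continuous_subtype_val
      exact (hcont.continuousAt.eventually (lt_mem_nhds hpos)).mono fun y hy _ => hy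
    filter_upwards [(hD.eventually_all).2 hev] with y hy
    change (y : E) ∈ F
    refine hFeq.symm.subset fun l hl => ?_
    have hz := hspan y y.2 l hl
    refine ⟨?_, hz⟩
    by_cases h0 : l w = 0
    · exact (hz h0).ge
    · exact (hy l hl h0).le

end convex

/-- The relative interior of a nonempty face `F` of `C_v(I)` (for `v ∈ ℝ^n_{>0}`)
is exactly one equivalence class: for any `w` in the relative interior of `F`,
the relative interior of `F` equals `{u : in_u(I) = in_w(I)}`. -/
theorem relativeInterior_of_face_is_equivalenceClass
    (I : Ideal (MvPolynomial (Fin n) k))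
    (v : Fin n → ℝ) (hv : ∀ i, 0 < v i)
    (F : Set (Fin n → ℝ)) (hF : IsFaceOf (Cv I v) F) (hFne : F.Nonempty)
    (w : Fin n → ℝ) (hw : w ∈ intrinsicInterior ℝ F) :
    intrinsicInterior ℝ F = {u : Fin n → ℝ | initialFormIdeal u I = initialFormIdeal w I} := by
  obtain ⟨D, hD, hDv, hDw⟩ := exists_functionals I v hv
  have hC : Cv I v = {u | ∀ l ∈ D, 0 ≤ l u ∧ (l v = 0 → l u = 0)} := by
    rw [← closure_class hDv, Cv]
    congr 1
    ext u
    exact hDw v hDv u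
  rcases hF with rfl | ⟨c, hc⟩
  · exact absurd hFne Set.not_nonempty_empty
  have hwC : w ∈ Cv I v := by
    have := intrinsicInterior_subset hw
    rw [hc] at this
    exact this.1
  have hlin : IsLinearMap ℝ fun x : Fin n → ℝ => ∑ i, c i * x i :=
    ⟨fun x y => by simp [mul_add, Finset.sum_add_distrib],
      fun r x => by simp [Finset.mul_sum, mul_left_comm]⟩
  rw [intrinsicInterior_face hD _ hlin hC hc hw]
  rw [hC] at hwC
  ext u
  exact (hDw w (fun l hl => (hwC l hl).1) u).symm
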